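/- Let L be a nilpotent symplectic alternating algebra of dimension 2n over a field 𝔽, and let I ⊆ J be ideals of L. (i) If dim J = dim I + 1 then J·L ⊆ I. (ii) If I is an ideal with dim I < 2n, then there exists an ideal J of L containing I with dim J = dim I + 1. (iii) If moreover I is isotropic with dim I < n, then J in (ii) can be chosen to be isotropic. -/

import Mathlib

/-!
Let `K` be an ideal not contained in the ideal `I`, and let `m` be the last index with
`K ∩ Lᵐ ⊈ I`, which exists by nilpotency. Any `x ∈ (K ∩ Lᵐ) \ I` satisfies
`x·L ⊆ K ∩ Lᵐ⁺¹ ⊆ I`, so `𝔽x + I` is an ideal covering `I` whose product with `L` lies in `I`.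

Taking `K = J` gives (i), as then `J = 𝔽x + I`, and taking `K = L` gives (ii). For (iii), take
`K = I^⊥`: it is an ideal, too large to lie in `I`, and `𝔽x + I` is isotropic because `x ∈ I^⊥`.
-/

variable {𝔽 : Type*} [Field 𝔽] {L : Type*} [AddCommGroup L] [Module 𝔽 L]

structure SymplecticAlternatingAlgebra (𝔽 L : Type*) [Field 𝔽] [AddCommGroup L]
    [Module 𝔽 L] where
  form : L →ₗ[𝔽] L →ₗ[𝔽] 𝔽
  mul : L →ₗ[𝔽] L →ₗ[𝔽] L
  form_alt : ∀ x, form x x = 0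
  form_nondeg : ∀ x, (∀ y, form x y = 0) → x = 0
  mul_alt : ∀ x, mul x x = 0
  compat : ∀ u v w, form (mul u v) w = form (mul v w) u

namespace SymplecticAlternatingAlgebra

variable (S : SymplecticAlternatingAlgebra 𝔽 L)

/-- `U·V`, the span of all products `u·v`. -/
def prodSub (U V : Submodule 𝔽 L) : Submodule 𝔽 L := Submodule.map₂ S.mul U V

/-- An ideal: `I·L ⊆ I`. -/
def IsIdeal (I : Submodule 𝔽 L) : Prop := S.prodSub I ⊤ ≤ I

/-- Orthogonal complement with respect to the form. -/
def perp (U : Submodule 𝔽 L) : Submodule 𝔽 L where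
  carrier := {x | ∀ u ∈ U, S.form x u = 0}
  add_mem' := by
    intro a b ha hb u hu
    simp [map_add, ha u hu, hb u hu]
  zero_mem' := by
    intro u hu
    simp
  smul_mem' := by
    intro c a ha u hu
    simp [ha u hu]

/-- `lcs n = L^(n+1)`: the lower central series, `lcs 0 = L¹ = L`. -/
def lcs : ℕ → Submodule 𝔽 L
  | 0 => ⊤
  | n + 1 => S.prodSub (lcs n) ⊤

/-- `ucs n = Z_n(L)`: the upper central series. -/
def ucs : ℕ → Submodule 𝔽 L
  | 0 => ⊥
  | n + 1 => ⨅ y : L, (ucs n).comap (S.mul.flip y)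

/-- The center `Z(L)`. -/
def center : Submodule 𝔽 L := ⨅ y : L, LinearMap.ker (S.mul.flip y)

/-- Nilpotency: some term of the lower central series vanishes. -/
def IsNilpotent : Prop := ∃ n, S.lcs n = ⊥

/-- `s` generates `L` as an algebra: the smallest subspace containing `s`
and closed under the multiplication is `L` itself. -/
def Generates (s : Set L) : Prop :=
  ∀ M : Submodule 𝔽 L, s ⊆ (M : Set L) → S.prodSub M M ≤ M → M = ⊤

end SymplecticAlternatingAlgebra

open SymplecticAlternatingAlgebra Module

theorem covBy_iff_le_and_finrank_eq_add_one {K V : Type*} [DivisionRing K] [AddCommGroup V]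
    [Module K V] {U W : Submodule K V} [FiniteDimensional K W] :
    U ⋖ W ↔ U ≤ W ∧ finrank K W = finrank K U + 1 := by
  suffices h : U ≤ W → (U ⋖ W ↔ finrank K W = finrank K U + 1) from
    ⟨fun hUW => ⟨hUW.le, (h hUW.le).1 hUW⟩, fun hUW => (h hUW.1).2 hUW.2⟩
  intro hle
  have hquot := (U.comap W.subtype).finrank_quotient_add_finrank
  rw [(Submodule.comapSubtypeEquivOfLe hle).finrank_eq] at hquot
  rw [covBy_iff_quot_is_simple hle, isSimpleModule_iff_finrank_eq_one]
  omega

namespace SymplecticAlternatingAlgebra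

section Ideals

variable {S : SymplecticAlternatingAlgebra 𝔽 L} {I J K : Submodule 𝔽 L}

theorem isIdeal_iff : S.IsIdeal I ↔ ∀ x ∈ I, ∀ y, S.mul x y ∈ I := by
  simp only [IsIdeal, prodSub, Submodule.map₂_le, Submodule.mem_top, forall_const]

theorem isIdeal_top : S.IsIdeal ⊤ := le_top

theorem exists_mem_notMem_prodSub_span_le (hnil : S.IsNilpotent) (hK : S.IsIdeal K)
    (hKI : ¬K ≤ I) : ∃ x ∈ K, x ∉ I ∧ S.prodSub (𝔽 ∙ x) ⊤ ≤ I := by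
  have hzero : ¬K ⊓ S.lcs 0 ≤ I := by rwa [lcs, inf_top_eq]
  have hlast : ∃ m, K ⊓ S.lcs m ≤ I := hnil.imp fun m hm => by simp [hm]
  obtain ⟨m, hm, hm_succ⟩ := Nat.exists_not_and_succ_of_not_zero_of_exists hzero hlast
  obtain ⟨x, ⟨hxK, hxm⟩, hxI⟩ := SetLike.not_le_iff_exists.1 hm
  refine ⟨x, hxK, hxI, le_trans (le_inf ?_ ?_) hm_succ⟩
  · exact (Submodule.map₂_le_map₂_left ((Submodule.span_singleton_le_iff_mem x K).2 hxK)).trans hK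
  · exact Submodule.map₂_le_map₂_left ((Submodule.span_singleton_le_iff_mem x _).2 hxm)

theorem exists_mem_covBy_span_sup (hnil : S.IsNilpotent) (hI : S.IsIdeal I) (hK : S.IsIdeal K)
    (hKI : ¬K ≤ I) : ∃ x ∈ K, I ⋖ 𝔽 ∙ x ⊔ I ∧ S.prodSub (𝔽 ∙ x ⊔ I) ⊤ ≤ I := by
  obtain ⟨x, hxK, hxI, hx⟩ := exists_mem_notMem_prodSub_span_le hnil hK hKI
  refine ⟨x, hxK, Submodule.covBy_span_singleton_sup hxI, ?_⟩
  rw [prodSub, Submodule.map₂_sup_left]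
  exact sup_le hx hI

theorem prodSub_top_le_of_covBy (hnil : S.IsNilpotent) (hI : S.IsIdeal I) (hJ : S.IsIdeal J)
    (hIJ : I ⋖ J) : S.prodSub J ⊤ ≤ I := by
  obtain ⟨x, hxJ, hcov, hx⟩ := exists_mem_covBy_span_sup hnil hI hJ hIJ.lt.not_ge
  have hle : 𝔽 ∙ x ⊔ I ≤ J := sup_le ((Submodule.span_singleton_le_iff_mem x J).2 hxJ) hIJ.le
  have heq : 𝔽 ∙ x ⊔ I = J := (hIJ.eq_or_eq hcov.le hle).resolve_left hcov.ne'
  rwa [heq] at hx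

end Ideals

section Perp

variable (S : SymplecticAlternatingAlgebra 𝔽 L) {I U V : Submodule 𝔽 L}

theorem isAlt_form : S.form.IsAlt := S.form_alt

theorem isAlt_mul : S.mul.IsAlt := S.mul_alt

theorem le_perp_comm : U ≤ S.perp V ↔ V ≤ S.perp U :=
  ⟨fun h v hv _ hu => S.isAlt_form.eq_iff.1 (h hu v hv),
    fun h u hu _ hv => S.isAlt_form.eq_iff.1 (h hv u hu)⟩

theorem perp_sup : S.perp (U ⊔ V) = S.perp U ⊓ S.perp V :=
  eq_of_forall_le_iff fun W => by
    rw [le_perp_comm, sup_le_iff, le_inf_iff, S.le_perp_comm (V := W), S.le_perp_comm (V := W)]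

theorem sup_le_perp_sup (hU : U ≤ S.perp U) (hV : V ≤ S.perp V) (hUV : U ≤ S.perp V) :
    U ⊔ V ≤ S.perp (U ⊔ V) := by
  rw [perp_sup]
  exact sup_le (le_inf hU hUV) (le_inf (S.le_perp_comm.1 hUV) hV)

theorem span_singleton_le_perp_self (x : L) : 𝔽 ∙ x ≤ S.perp (𝔽 ∙ x) := by
  rw [Submodule.span_singleton_le_iff_mem]
  intro u hu
  obtain ⟨c, rfl⟩ := Submodule.mem_span_singleton.1 hu
  rw [map_smul, S.form_alt, smul_zero]

variable {S} in
theorem IsIdeal.perp (hI : S.IsIdeal I) : S.IsIdeal (S.perp I) := by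
  refine isIdeal_iff.2 fun x hx y u hu => ?_
  calc S.form (S.mul x y) u = S.form (S.mul y u) x := S.compat x y u
    _ = S.form x (S.mul u y) := by
      rw [← S.isAlt_form.neg, ← S.isAlt_mul.neg u y, map_neg, neg_neg]
    _ = 0 := hx _ (isIdeal_iff.1 hI u hu y)

theorem perp_eq_orthogonalBilin (U : Submodule 𝔽 L) : S.perp U = U.orthogonalBilin S.form :=
  Submodule.ext fun _ => forall₂_congr fun _ _ => S.isAlt_form.eq_iff

theorem ker_form : LinearMap.ker S.form = ⊥ :=
  LinearMap.ker_eq_bot'.2 fun x hx => S.form_nondeg x (LinearMap.congr_fun hx)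

theorem finrank_add_finrank_perp [FiniteDimensional 𝔽 L] (U : Submodule 𝔽 L) :
    finrank 𝔽 U + finrank 𝔽 (S.perp U) = finrank 𝔽 L := by
  have hrank := LinearMap.BilinForm.finrank_add_finrank_orthogonal' (B := S.form) U
  rwa [S.ker_form, inf_bot_eq, finrank_bot, add_zero, LinearMap.BilinForm.orthogonal,
    ← perp_eq_orthogonalBilin] at hrank

theorem lt_perp_of_two_mul_finrank_lt [FiniteDimensional 𝔽 L] (hU : U ≤ S.perp U)
    (hrank : 2 * finrank 𝔽 U < finrank 𝔽 L) : U < S.perp U := by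
  refine lt_of_le_of_ne hU fun heq => ?_
  have hsum := S.finrank_add_finrank_perp U
  rw [← heq] at hsum
  omega

end Perp

end SymplecticAlternatingAlgebra

theorem ideal_extension_general (S : SymplecticAlternatingAlgebra 𝔽 L) (hnil : S.IsNilpotent)
    {I : Submodule 𝔽 L} (hI : S.IsIdeal I) :
    (∀ J, S.IsIdeal J → I ⋖ J → S.prodSub J ⊤ ≤ I) ∧
    (I < ⊤ → ∃ J, S.IsIdeal J ∧ I ⋖ J) ∧
    (I < S.perp I → ∃ J, S.IsIdeal J ∧ I ⋖ J ∧ J ≤ S.perp J) := by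
  refine ⟨fun J hJ hIJ => prodSub_top_le_of_covBy hnil hI hJ hIJ, fun htop => ?_, fun hperp => ?_⟩
  · obtain ⟨x, -, hcov, hx⟩ := exists_mem_covBy_span_sup hnil hI isIdeal_top htop.not_ge
    exact ⟨𝔽 ∙ x ⊔ I, hx.trans le_sup_right, hcov⟩
  · obtain ⟨x, hxI, hcov, hx⟩ := exists_mem_covBy_span_sup hnil hI hI.perp hperp.not_ge
    have hspan : 𝔽 ∙ x ≤ S.perp I := (Submodule.span_singleton_le_iff_mem x _).2 hxI
    exact ⟨𝔽 ∙ x ⊔ I, hx.trans le_sup_right, hcov,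
      S.sup_le_perp_sup (S.span_singleton_le_perp_self x) hperp.le hspan⟩

theorem ideal_extension [FiniteDimensional 𝔽 L]
    (S : SymplecticAlternatingAlgebra 𝔽 L) (hnil : S.IsNilpotent)
    (n : ℕ) (hdim : Module.finrank 𝔽 L = 2 * n)
    (I : Submodule 𝔽 L) (hI : S.IsIdeal I) :
    (∀ J : Submodule 𝔽 L, S.IsIdeal J → I ≤ J →
      Module.finrank 𝔽 J = Module.finrank 𝔽 I + 1 → S.prodSub J ⊤ ≤ I) ∧
    (Module.finrank 𝔽 I < 2 * n →
      ∃ J : Submodule 𝔽 L, S.IsIdeal J ∧ I ≤ J ∧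
        Module.finrank 𝔽 J = Module.finrank 𝔽 I + 1) ∧
    (I ≤ S.perp I → Module.finrank 𝔽 I < n →
      ∃ J : Submodule 𝔽 L, S.IsIdeal J ∧ I ≤ J ∧
        Module.finrank 𝔽 J = Module.finrank 𝔽 I + 1 ∧ J ≤ S.perp J) := by
  obtain ⟨hmul, hext, hiso⟩ := ideal_extension_general S hnil hI
  simp only [covBy_iff_le_and_finrank_eq_add_one, and_imp, and_assoc] at hmul hext hiso
  exact ⟨hmul, fun hlt => hext (Submodule.lt_top_of_finrank_lt_finrank (hdim ▸ hlt)),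
    fun hle hlt => hiso (S.lt_perp_of_two_mul_finrank_lt hle (by omega))⟩
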